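/- arXiv:math/0510011 — 3 statements merged into one kernel-verified Lean document; each statement's English description precedes it below -/
import Mathlib

section
/- Let R be a commutative ring, n ≥ 2, and M a symmetric n×n matrix over R. For subsets S, T ⊆ {1,…,n} of equal size let M(S,T) denote the square matrix obtained from M by deleting the rows with index in S and the columns with index in T (the determinant of the empty 0×0 matrix being 1). Then det M({1},{1}) · det M({2},{2}) − det M · det M({1,2},{1,2}) = (det M({1},{2}))². -/
/-!
Jacobi's complementary minor identity carries the argument. Split the index set in two, and replace
the second block column of `adj N` by that of the identity matrix. By `N * adj N = det N • 1`, the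
product of `N` with the result is block triangular, and taking determinants gives the identity up
to a factor `det N`. That factor cancels for the generic matrix, hence for every matrix. For a first
block of size two this is Dodgson's identity, and symmetry of `M` identifies the two off-diagonal
minors.
-/

open Matrix

section Jacobi

variable {R m n : Type*} [CommRing R] [Fintype m] [Fintype n] [DecidableEq m] [DecidableEq n]

theorem mul_fromBlocks_adjugate_zero_one (N : Matrix (m ⊕ n) (m ⊕ n) R) :
    N * fromBlocks N.adjugate.toBlocks₁₁ 0 N.adjugate.toBlocks₂₁ 1 =
      fromBlocks (N.det • 1) N.toBlocks₁₂ 0 N.toBlocks₂₂ := by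
  have mul_adjugate_blocks :
      fromBlocks N.toBlocks₁₁ N.toBlocks₁₂ N.toBlocks₂₁ N.toBlocks₂₂ *
          fromBlocks N.adjugate.toBlocks₁₁ N.adjugate.toBlocks₁₂
            N.adjugate.toBlocks₂₁ N.adjugate.toBlocks₂₂ =
        fromBlocks (N.det • 1) 0 0 (N.det • 1) := by
    rw [fromBlocks_toBlocks, fromBlocks_toBlocks, mul_adjugate, ← fromBlocks_one, fromBlocks_smul,
      smul_zero, smul_zero]
  rw [fromBlocks_multiply, fromBlocks_inj] at mul_adjugate_blocks
  obtain ⟨first_column_top, -, first_column_bottom, -⟩ := mul_adjugate_blocks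
  nth_rw 1 [← fromBlocks_toBlocks N]
  rw [fromBlocks_multiply, first_column_top, first_column_bottom]
  simp only [Matrix.mul_zero, Matrix.mul_one, zero_add]

theorem det_adjugate_toBlocks₁₁_mul_det (N : Matrix (m ⊕ n) (m ⊕ n) R) :
    N.adjugate.toBlocks₁₁.det * N.det = N.det ^ Fintype.card m * N.toBlocks₂₂.det := by
  have det_eq := congrArg det (mul_fromBlocks_adjugate_zero_one N)
  rwa [det_mul, det_fromBlocks_zero₁₂, det_fromBlocks_zero₂₁, det_one, mul_one, det_smul, det_one,
    mul_one, mul_comm] at det_eq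

theorem det_adjugate_toBlocks₁₁ [Nonempty m] (N : Matrix (m ⊕ n) (m ⊕ n) R) :
    N.adjugate.toBlocks₁₁.det = N.det ^ (Fintype.card m - 1) * N.toBlocks₂₂.det := by
  let X := mvPolynomialX (m ⊕ n) (m ⊕ n) ℤ
  have generic : X.adjugate.toBlocks₁₁.det = X.det ^ (Fintype.card m - 1) * X.toBlocks₂₂.det := by
    apply mul_right_cancel₀ (det_mvPolynomialX_ne_zero (m ⊕ n) ℤ)
    rw [det_adjugate_toBlocks₁₁_mul_det, mul_right_comm, pow_sub_one_mul Fintype.card_ne_zero]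
  let φ := MvPolynomial.aeval (R := ℤ) fun p : (m ⊕ n) × (m ⊕ n) => N p.1 p.2
  have map_X : φ.mapMatrix X = N := mvPolynomialX_mapMatrix_aeval ℤ N
  have map_adjugate_block : φ.mapMatrix X.adjugate.toBlocks₁₁ = N.adjugate.toBlocks₁₁ := by
    rw [← map_X, ← AlgHom.map_adjugate]
    rfl
  have map_block : φ.mapMatrix X.toBlocks₂₂ = N.toBlocks₂₂ := by
    rw [← map_X]
    rfl
  have specialized := congrArg φ generic
  rwa [map_mul, map_pow, AlgHom.map_det, AlgHom.map_det, AlgHom.map_det, map_X, map_adjugate_block,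
    map_block] at specialized

theorem det_adjugate_submatrix_inl {ι : Type*} [Fintype ι] [DecidableEq ι] [Nonempty m]
    (e : m ⊕ n ≃ ι) (M : Matrix ι ι R) :
    (M.adjugate.submatrix (e ∘ Sum.inl) (e ∘ Sum.inl)).det =
      M.det ^ (Fintype.card m - 1) * (M.submatrix (e ∘ Sum.inr) (e ∘ Sum.inr)).det := by
  have jacobi := det_adjugate_toBlocks₁₁ (M.submatrix e e)
  rwa [adjugate_submatrix_equiv_self, det_submatrix_equiv_self] at jacobi

end Jacobi

theorem dodgson_identity {R : Type*} [CommRing R] {m : ℕ}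
    (M : Matrix (Fin (m + 2)) (Fin (m + 2)) R) :
    (M.submatrix Fin.succ Fin.succ).det *
        (M.submatrix (Fin.succAbove 1) (Fin.succAbove 1)).det
      - M.det *
        (M.submatrix (fun i : Fin m => i.succ.succ) (fun j : Fin m => j.succ.succ)).det
      = (M.submatrix Fin.succ (Fin.succAbove 1)).det *
        (M.submatrix (Fin.succAbove 1) Fin.succ).det := by
  let e : Fin 2 ⊕ Fin m ≃ Fin (m + 2) := finSumFinEquiv.trans (finCongr (add_comm 2 m))
  have e_inl_zero : e (Sum.inl 0) = 0 := by ext; simp [e]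
  have e_inl_one : e (Sum.inl 1) = 1 := by ext; simp [e]
  have e_inr : e ∘ Sum.inr = fun i : Fin m => i.succ.succ := by ext; simp [e]
  have adjugate_minor : M.adjugate 0 0 * M.adjugate 1 1 - M.adjugate 0 1 * M.adjugate 1 0 =
      M.det * (M.submatrix (fun i : Fin m => i.succ.succ) (fun j : Fin m => j.succ.succ)).det := by
    simpa [e_inr, det_fin_two, e_inl_zero, e_inl_one] using det_adjugate_submatrix_inl e M
  have adjugate_zero_zero : M.adjugate 0 0 = (M.submatrix Fin.succ Fin.succ).det := by
    simp [adjugate_fin_succ_eq_det_submatrix]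
  have adjugate_one_one :
      M.adjugate 1 1 = (M.submatrix (Fin.succAbove 1) (Fin.succAbove 1)).det := by
    simp [adjugate_fin_succ_eq_det_submatrix]
  have adjugate_zero_one :
      M.adjugate 0 1 = -(M.submatrix (Fin.succAbove 1) Fin.succ).det := by
    simp [adjugate_fin_succ_eq_det_submatrix]
  have adjugate_one_zero :
      M.adjugate 1 0 = -(M.submatrix Fin.succ (Fin.succAbove 1)).det := by
    simp [adjugate_fin_succ_eq_det_submatrix]
  rw [← adjugate_minor, adjugate_zero_zero, adjugate_one_one, adjugate_zero_one, adjugate_one_zero]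
  ring

/-- **Symmetric Dodgson identity.**  For a symmetric `n × n` matrix `M`
(`n = m + 2 ≥ 2`) over a commutative ring, writing `M(S,T)` for the matrix with the
rows in `S` and the columns in `T` deleted (1-based indexing as in the paper),
`det M({1},{1}) · det M({2},{2}) − det M · det M({1,2},{1,2}) = (det M({1},{2}))²`. -/
theorem dodgson_identity_symm {R : Type} [CommRing R] (m : ℕ)
    (M : Matrix (Fin (m + 2)) (Fin (m + 2)) R) (hM : M.IsSymm) :
    (M.submatrix Fin.succ Fin.succ).det *
        (M.submatrix (Fin.succAbove 1) (Fin.succAbove 1)).det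
      - M.det *
        (M.submatrix (fun i : Fin m => i.succ.succ) (fun j : Fin m => j.succ.succ)).det
      = (M.submatrix Fin.succ (Fin.succAbove 1)).det ^ 2 := by
  have off_diagonal_minors_eq : (M.submatrix (Fin.succAbove 1) Fin.succ).det =
      (M.submatrix Fin.succ (Fin.succAbove 1)).det := by
    rw [← det_transpose, transpose_submatrix, hM.eq]
  rw [dodgson_identity, off_diagonal_minors_eq, sq]
end

section
/- Let R be an integral domain and n ≥ 2. For elements B_1,…,B_n, A_1,…,A_{n−1} of R with Q_n(B_1,…,B_n; A_1,…,A_{n−1}) = 0, the following are equivalent: (i) Q_{n−1}(B_1,…,B_{n−1}; A_1,…,A_{n−2}) = 0 or Q_{n−1}(B_2,…,B_n; A_2,…,A_{n−1}) = 0; (ii) A_1·A_2·⋯·A_{n−1} = 0. -/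
/-- `Qtri n B A` is the determinant of the `n × n` symmetric tridiagonal matrix with
diagonal entries `B 1, …, B n` and off-diagonal entries `A 1, …, A (n-1)`
(so `Qtri 0 B A = 1` by convention). -/
def Qtri {R : Type} [CommRing R] (n : ℕ) (B A : ℕ → R) : R :=
  Matrix.det (Matrix.of fun i j : Fin n =>
    if (i : ℕ) = (j : ℕ) then B ((i : ℕ) + 1)
    else if (i : ℕ) + 1 = (j : ℕ) then A ((i : ℕ) + 1)
    else if (j : ℕ) + 1 = (i : ℕ) then A ((j : ℕ) + 1)
    else 0)

/-!
Expanding a tridiagonal determinant along its first row and column gives the three-term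
recurrence of continuants. By induction, the product of the two `(n - 1)`-minors obtained by
deleting the last or the first index differs from the product of the full determinant and the
central `(n - 2)`-minor by the product of all off-diagonal entries (a case of the
Desnanot–Jacobi identity). When the full determinant vanishes, only the product of the two
minors remains, and it equals `(A₁ ⋯ Aₙ₋₁)²`.
-/

/-- The `n × n` tridiagonal matrix with diagonal `d 0, …, d (n - 1)`, superdiagonal
`u 0, …, u (n - 2)` and subdiagonal `l 0, …, l (n - 2)`. The entries are read off from
sequences on `ℕ`, so that deleting the first index amounts to shifting the sequences. -/
def tridiagonal {R : Type*} [Zero R] (n : ℕ) (d u l : ℕ → R) : Matrix (Fin n) (Fin n) R :=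
  Matrix.of fun i j =>
    if (i : ℕ) = j then d i
    else if (i : ℕ) + 1 = j then u i
    else if (j : ℕ) + 1 = i then l j
    else 0

theorem tridiagonal_submatrix_succ {R : Type*} [Zero R] (n : ℕ) (d u l : ℕ → R) :
    (tridiagonal (n + 1) d u l).submatrix Fin.succ Fin.succ =
      tridiagonal n (fun k => d (k + 1)) (fun k => u (k + 1)) (fun k => l (k + 1)) := by
  ext i j
  simp [tridiagonal]

section Determinant

variable {R : Type*} [CommRing R]

theorem det_eq_sub_of_row_col_eq_zero {n : ℕ} (M : Matrix (Fin (n + 2)) (Fin (n + 2)) R)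
    (row_zero : ∀ j : Fin n, M 0 j.succ.succ = 0) (col_zero : ∀ i : Fin n, M i.succ.succ 0 = 0) :
    M.det = M 0 0 * (M.submatrix Fin.succ Fin.succ).det -
      M 0 1 * M 1 0 * (M.submatrix (Fin.succ ∘ Fin.succ) (Fin.succ ∘ Fin.succ)).det := by
  have minor_zero_one : (M.submatrix Fin.succ (Fin.succAbove 1)).det =
      M 1 0 * (M.submatrix (Fin.succ ∘ Fin.succ) (Fin.succ ∘ Fin.succ)).det := by
    have succAbove_one_comp_succ :
        Fin.succAbove (1 : Fin (n + 2)) ∘ Fin.succ = Fin.succ ∘ Fin.succ :=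
      funext Fin.one_succAbove_succ
    rw [Matrix.det_succ_column_zero, Fin.sum_univ_succ]
    simp [col_zero, Matrix.submatrix_submatrix, succAbove_one_comp_succ]
  rw [Matrix.det_succ_row_zero, Fin.sum_univ_succ, Fin.sum_univ_succ]
  simp [row_zero, minor_zero_one, sub_eq_add_neg, mul_assoc]

theorem det_tridiagonal_add_two (n : ℕ) (d u l : ℕ → R) :
    (tridiagonal (n + 2) d u l).det =
      d 0 * (tridiagonal (n + 1) (fun k => d (k + 1)) (fun k => u (k + 1))
        (fun k => l (k + 1))).det -
      u 0 * l 0 * (tridiagonal n (fun k => d (k + 2)) (fun k => u (k + 2))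
        (fun k => l (k + 2))).det := by
  rw [det_eq_sub_of_row_col_eq_zero _ (by simp [tridiagonal]) (by simp [tridiagonal]),
    ← Matrix.submatrix_submatrix, tridiagonal_submatrix_succ, tridiagonal_submatrix_succ]
  simp [tridiagonal]

theorem det_tridiagonal_mul_sub_mul (n : ℕ) (d u l : ℕ → R) :
    (tridiagonal (n + 1) d u l).det *
        (tridiagonal (n + 1) (fun k => d (k + 1)) (fun k => u (k + 1)) (fun k => l (k + 1))).det -
      (tridiagonal (n + 2) d u l).det *
        (tridiagonal n (fun k => d (k + 1)) (fun k => u (k + 1)) (fun k => l (k + 1))).det =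
      ∏ i ∈ Finset.range (n + 1), u i * l i := by
  induction n generalizing d u l with
  | zero =>
    rw [det_tridiagonal_add_two]
    simp [tridiagonal]
  | succ n ih =>
    rw [Finset.prod_range_succ', ← ih, det_tridiagonal_add_two (n + 1) d,
      det_tridiagonal_add_two n d]
    ring

end Determinant

theorem Qtri_eq_det_tridiagonal {R : Type} [CommRing R] (n : ℕ) (B A : ℕ → R) :
    Qtri n B A =
      (tridiagonal n (fun k => B (k + 1)) (fun k => A (k + 1)) (fun k => A (k + 1))).det :=
  rfl

theorem Qtri_mul_sub_mul {R : Type} [CommRing R] (n : ℕ) (B A : ℕ → R) :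
    Qtri (n + 1) B A * Qtri (n + 1) (fun k => B (k + 1)) (fun k => A (k + 1)) -
      Qtri (n + 2) B A * Qtri n (fun k => B (k + 1)) (fun k => A (k + 1)) =
      (∏ i ∈ Finset.Icc 1 (n + 1), A i) ^ 2 := by
  simp only [Qtri_eq_det_tridiagonal]
  rw [det_tridiagonal_mul_sub_mul, Finset.prod_mul_distrib, ← sq, Finset.range_eq_Ico,
    Finset.prod_Ico_add' A, zero_add, Finset.Ico_add_one_right_eq_Icc]

/-- **`V(Q_n, Q_{n−1}(1)) ∪ V(Q_n, Q_{n−1}(2)) = V(A_1⋯A_{n−1}, Q_n)`**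
(eq. (11.56) of the paper).  Over an integral domain, for `n ≥ 2`, assuming
`Q_n(B_1,…,B_n; A_1,…,A_{n−1}) = 0`, the following are equivalent:
(i) `Q_{n−1}(B_1,…,B_{n−1}; A_1,…,A_{n−2}) = 0` or
`Q_{n−1}(B_2,…,B_n; A_2,…,A_{n−1}) = 0`; (ii) `A_1·A_2·⋯·A_{n−1} = 0`. -/
theorem qtri_union_eq_product_zero {R : Type} [CommRing R] [IsDomain R]
    (n : ℕ) (hn : 2 ≤ n) (B A : ℕ → R) (h : Qtri n B A = 0) :
    (Qtri (n - 1) B A = 0 ∨ Qtri (n - 1) (fun k => B (k + 1)) (fun k => A (k + 1)) = 0) ↔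
      ∏ i ∈ Finset.Icc 1 (n - 1), A i = 0 := by
  obtain ⟨m, rfl⟩ := Nat.exists_eq_add_of_le' hn
  have minors_mul : Qtri (m + 1) B A * Qtri (m + 1) (fun k => B (k + 1)) (fun k => A (k + 1)) =
      (∏ i ∈ Finset.Icc 1 (m + 1), A i) ^ 2 := by
    rw [← Qtri_mul_sub_mul, h, zero_mul, sub_zero]
  rw [show m + 2 - 1 = m + 1 from rfl, ← mul_eq_zero, minors_mul, sq_eq_zero_iff]
end

section
/- Let R be a commutative ring and n ≥ 3. For elements B_1,…,B_{n−1}, A_0, A_1,…,A_{n−1} of R define K_n := −A_0²·Q_{n−2}(B_2,…,B_{n−1}; A_2,…,A_{n−2}) − A_{n−1}²·Q_{n−2}(B_1,…,B_{n−2}; A_1,…,A_{n−3}) + 2·(−1)^{n−1}·A_0·A_1·⋯·A_{n−1}. Then K_n·Q_{n−2}(B_2,…,B_{n−1}; A_2,…,A_{n−2}) + (A_0·Q_{n−2}(B_2,…,B_{n−1}; A_2,…,A_{n−2}) + (−1)^{n}·A_1·A_2·⋯·A_{n−1})² = −A_{n−1}²·Q_{n−3}(B_2,…,B_{n−2}; A_2,…,A_{n−3})·Q_{n−1}(B_1,…,B_{n−1};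 A_1,…,A_{n−2}). In particular the left-hand side is divisible by Q_{n−1}(B_1,…,B_{n−1}; A_1,…,A_{n−2}), so K_n·Q_{n−2}(B_2,…,B_{n−1}; A_2,…,A_{n−2}) is congruent to minus a perfect square modulo Q_{n−1}(B_1,…,B_{n−1}; A_1,…,A_{n−2}). -/
/-!
For fixed `B` and `A`, the determinants `Q_{m+1}(B_1, …; A_1, …)` and `Q_m(B_2, …; A_2, …)` satisfy
the same three-term recurrence in `m`, with trailing coefficient `A_{m+2}²`. Their Casoratian is
therefore multiplied by this coefficient at each step, and it equals `(A_1 ⋯ A_{m+1})²`. In the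
left-hand side of the congruence the terms involving `A_0` cancel, leaving `-A_{n-1}²` times
`Q_{n-2}(B_1, …; A_1, …) * Q_{n-2}(B_2, …; A_2, …) - (A_1 ⋯ A_{n-2})²`, which the Casoratian
identity evaluates.
-/

section Determinant

variable {S : Type*} [CommRing S] {k : ℕ}

theorem det_eq_mul_det_submatrix_castSucc_of_last_col_eq_zero
    (M : Matrix (Fin (k + 1)) (Fin (k + 1)) S)
    (hcol : ∀ i : Fin k, M i.castSucc (Fin.last k) = 0) :
    M.det = M (Fin.last k) (Fin.last k) * (M.submatrix Fin.castSucc Fin.castSucc).det := by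
  have hsign : (-1 : S) ^ (k + k) = 1 := (Even.add_self k).neg_one_pow
  simp [Matrix.det_succ_column M (Fin.last k), Fin.sum_univ_castSucc, hcol, hsign]

theorem det_eq_sub_of_last_row_col_eq_zero (M : Matrix (Fin (k + 2)) (Fin (k + 2)) S)
    (hrow : ∀ j : Fin k, M (Fin.last (k + 1)) j.castSucc.castSucc = 0)
    (hcol : ∀ i : Fin k, M i.castSucc.castSucc (Fin.last (k + 1)) = 0) :
    M.det = M (Fin.last (k + 1)) (Fin.last (k + 1)) * (M.submatrix Fin.castSucc Fin.castSucc).det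
      - M (Fin.last (k + 1)) (Fin.last k).castSucc * M (Fin.last k).castSucc (Fin.last (k + 1))
        * ((M.submatrix Fin.castSucc Fin.castSucc).submatrix Fin.castSucc Fin.castSucc).det := by
  have hlast : (Fin.last k).castSucc.succAbove (Fin.last k) = Fin.last (k + 1) := by simp
  have hinit (j : Fin k) :
      (Fin.last k).castSucc.succAbove j.castSucc = j.castSucc.castSucc :=
    Fin.succAbove_of_castSucc_lt _ _ (by simp [Fin.lt_def])
  have hminor : (M.submatrix Fin.castSucc (Fin.last k).castSucc.succAbove).det
      = M (Fin.last k).castSucc (Fin.last (k + 1))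
        * ((M.submatrix Fin.castSucc Fin.castSucc).submatrix Fin.castSucc Fin.castSucc).det := by
    rw [det_eq_mul_det_submatrix_castSucc_of_last_col_eq_zero _ fun i => by
      rw [Matrix.submatrix_apply, hlast, hcol], Matrix.submatrix_apply, hlast]
    congr 2
    ext i j
    simp only [Matrix.submatrix_apply, hinit]
  have hsign_even : (-1 : S) ^ (k + 1 + (k + 1)) = 1 := (Even.add_self (k + 1)).neg_one_pow
  have hsign_odd : (-1 : S) ^ (k + 1 + k) = -1 := Odd.neg_one_pow ⟨k, by ring⟩
  rw [Matrix.det_succ_row M (Fin.last (k + 1)), Fin.sum_univ_castSucc, Fin.sum_univ_castSucc]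
  simp only [hrow, hminor, hsign_even, hsign_odd, Fin.succAbove_last, Fin.val_castSucc,
    Fin.val_last, mul_zero, zero_mul, Finset.sum_const_zero]
  ring

end Determinant

theorem casoratian_eq_mul_prod {S : Type*} [CommRing S] {u v b c : ℕ → S}
    (hu : ∀ m, u (m + 2) = b m * u (m + 1) - c m * u m)
    (hv : ∀ m, v (m + 2) = b m * v (m + 1) - c m * v m) (m : ℕ) :
    u m * v (m + 1) - u (m + 1) * v m
      = (u 0 * v 1 - u 1 * v 0) * ∏ i ∈ Finset.range m, c i := by
  induction m with
  | zero => simp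
  | succ m ih =>
    rw [Finset.prod_range_succ, ← mul_assoc, ← ih, hu, hv]
    ring

section Tridiagonal

variable {R : Type} [CommRing R] (B A : ℕ → R) (m : ℕ)

theorem Qtri_zero : Qtri 0 B A = 1 :=
  Matrix.det_fin_zero

theorem Qtri_one : Qtri 1 B A = B 1 := by
  simp [Qtri]

theorem Qtri_add_two :
    Qtri (m + 2) B A = B (m + 2) * Qtri (m + 1) B A - A (m + 1) ^ 2 * Qtri m B A := by
  unfold Qtri
  rw [det_eq_sub_of_last_row_col_eq_zero]
  · have hne : m + 1 + 1 ≠ m := by lia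
    simp [Matrix.submatrix, sq, hne]
  all_goals
    intro i
    have := i.isLt
    simp only [Matrix.of_apply, Fin.val_castSucc, Fin.val_last]
    rw [if_neg (by lia), if_neg (by lia), if_neg (by lia)]

theorem Qtri_mul_Qtri_shift_sub_eq_prod_sq :
    Qtri (m + 1) B A * Qtri (m + 1) (fun k => B (k + 1)) (fun k => A (k + 1))
      - Qtri (m + 2) B A * Qtri m (fun k => B (k + 1)) (fun k => A (k + 1))
      = (∏ i ∈ Finset.Icc 1 (m + 1), A i) ^ 2 := by
  have hinitial : Qtri 1 B A * Qtri 1 (fun k => B (k + 1)) (fun k => A (k + 1))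
      - Qtri 2 B A * Qtri 0 (fun k => B (k + 1)) (fun k => A (k + 1)) = A 1 ^ 2 := by
    rw [Qtri_add_two, Qtri_one, Qtri_one, Qtri_zero, Qtri_zero]
    ring
  have hprod : ∏ i ∈ Finset.Icc 1 (m + 1), A i = A 1 * ∏ i ∈ Finset.range m, A (i + 2) := by
    rw [← Finset.Ico_add_one_right_eq_Icc, Finset.prod_eq_prod_Ico_succ_bot (by lia),
      Finset.prod_Ico_eq_prod_range]
    simp [add_comm 2]
  calc
    _ = A 1 ^ 2 * ∏ i ∈ Finset.range m, A (i + 2) ^ 2 := by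
      rw [← hinitial]
      exact casoratian_eq_mul_prod (u := fun m => Qtri (m + 1) B A)
        (v := fun m => Qtri m (fun k => B (k + 1)) (fun k => A (k + 1)))
        (fun m => Qtri_add_two B A (m + 1)) (fun m => Qtri_add_two _ _ m) m
    _ = (∏ i ∈ Finset.Icc 1 (m + 1), A i) ^ 2 := by rw [hprod, mul_pow, Finset.prod_pow]

/-- The polynomial `K_n` in the decomposition `Ψ_n = B_0 * Q_{n-1} + K_n` of the wheel graph
polynomial. The index is the paper's `n`, so the truncated subtractions are meaningful only
for `2 ≤ n`. -/
def wheelK (n : ℕ) (B A : ℕ → R) : R :=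
  -(A 0) ^ 2 * Qtri (n - 2) (fun k => B (k + 1)) (fun k => A (k + 1))
    - (A (n - 1)) ^ 2 * Qtri (n - 2) B A
    + 2 * (-1 : R) ^ (n - 1) * ∏ i ∈ Finset.range n, A i

theorem wheelK_mul_Qtri_shift_add_sq :
    wheelK (m + 3) B A * Qtri (m + 1) (fun k => B (k + 1)) (fun k => A (k + 1))
      + (A 0 * Qtri (m + 1) (fun k => B (k + 1)) (fun k => A (k + 1))
          + (-1 : R) ^ (m + 3) * ∏ i ∈ Finset.Icc 1 (m + 2), A i) ^ 2
      = -(A (m + 2)) ^ 2 * Qtri m (fun k => B (k + 1)) (fun k => A (k + 1))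
          * Qtri (m + 2) B A := by
  have hcasoratian := Qtri_mul_Qtri_shift_sub_eq_prod_sq B A m
  have hsign : ((-1 : R) ^ (m + 2)) ^ 2 = 1 := by rw [← pow_mul', Even.neg_one_pow (by simp)]
  have hIcc : ∏ i ∈ Finset.Icc 1 (m + 2), A i
      = (∏ i ∈ Finset.Icc 1 (m + 1), A i) * A (m + 2) :=
    Finset.prod_Icc_succ_top (by lia) A
  have hrange : ∏ i ∈ Finset.range (m + 3), A i = A 0 * ∏ i ∈ Finset.Icc 1 (m + 2), A i :=
    Finset.prod_range_eq_mul_Ico A (by lia)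
  simp only [wheelK, Nat.add_one_sub_one, Nat.reduceSubDiff]
  rw [hrange, hIcc, pow_succ (-1 : R) (m + 2)]
  linear_combination (-(A (m + 2)) ^ 2) * hcasoratian
    + (A (m + 2) * ∏ i ∈ Finset.Icc 1 (m + 1), A i) ^ 2 * hsign

end Tridiagonal

/-- **The key congruence (12.7) for the de Rham class of the wheel**, in homogeneous
form.  For `n ≥ 3`, with
`K_n := −A_0²·Q_{n−2}(B_2,…,B_{n−1}; A_2,…,A_{n−2})
        − A_{n−1}²·Q_{n−2}(B_1,…,B_{n−2}; A_1,…,A_{n−3}) + 2·(−1)^{n−1}·A_0⋯A_{n−1}`,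
one has
`K_n·Q_{n−2}(B_2,…; A_2,…) + (A_0·Q_{n−2}(B_2,…; A_2,…) + (−1)^n·A_1⋯A_{n−1})²
   = −A_{n−1}²·Q_{n−3}(B_2,…,B_{n−2}; A_2,…,A_{n−3})·Q_{n−1}(B_1,…,B_{n−1}; A_1,…,A_{n−2})`;
in particular the left-hand side is divisible by `Q_{n−1}(B_1,…,B_{n−1}; A_1,…,A_{n−2})`. -/
theorem qtri_wheel_congruence {R : Type} [CommRing R] (n : ℕ) (hn : 3 ≤ n) (B A : ℕ → R) :
    ((-(A 0) ^ 2 * Qtri (n - 2) (fun k => B (k + 1)) (fun k => A (k + 1))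
          - (A (n - 1)) ^ 2 * Qtri (n - 2) B A
          + 2 * (-1 : R) ^ (n - 1) * ∏ i ∈ Finset.range n, A i)
        * Qtri (n - 2) (fun k => B (k + 1)) (fun k => A (k + 1))
      + (A 0 * Qtri (n - 2) (fun k => B (k + 1)) (fun k => A (k + 1))
          + (-1 : R) ^ n * ∏ i ∈ Finset.Icc 1 (n - 1), A i) ^ 2
      = -(A (n - 1)) ^ 2 * Qtri (n - 3) (fun k => B (k + 1)) (fun k => A (k + 1))
          * Qtri (n - 1) B A)
    ∧ Qtri (n - 1) B A ∣
        ((-(A 0) ^ 2 * Qtri (n - 2) (fun k => B (k + 1)) (fun k => A (k + 1))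
            - (A (n - 1)) ^ 2 * Qtri (n - 2) B A
            + 2 * (-1 : R) ^ (n - 1) * ∏ i ∈ Finset.range n, A i)
          * Qtri (n - 2) (fun k => B (k + 1)) (fun k => A (k + 1))
        + (A 0 * Qtri (n - 2) (fun k => B (k + 1)) (fun k => A (k + 1))
            + (-1 : R) ^ n * ∏ i ∈ Finset.Icc 1 (n - 1), A i) ^ 2) := by
  obtain ⟨m, rfl⟩ := Nat.exists_eq_add_of_le' hn
  have hidentity := wheelK_mul_Qtri_shift_add_sq B A m
  exact ⟨hidentity, Dvd.intro_left _ hidentity.symm⟩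
end
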